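/- Let G be a finite group acting by graded algebra automorphisms on F[V] = F[x_1,...,x_n] for a field F, and let f_1,...,f_n ∈ F[V]^G be homogeneous invariants. If the f_i are algebraically independent over F and the product of their degrees equals |G|, then F[V]^G = F[f_1,...,f_n]. -/

import Mathlib

open MvPolynomial Finset
open scoped ENNReal NNReal Polynomial

/-!
Compare growth of graded dimensions. By Dedekind's independence of characters, `F[V]` contains
`|G|` elements `b_g` that are linearly independent over the invariants. Suppose an invariant `p`
of degree `e` is not in `F[f]`. The relations `P(p) = 0` over `F[f]` all have degree at least two
in `p`, or else `p` is a fraction over `F[f]` whose reduced denominator is a non-constant divisor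
of every leading coefficient (rational root theorem). In either case there is `o ∈ {p, f_1, …, f_n}`
such that the monomials in `p, f_1, …, f_n` not divisible by `p * o` are linearly independent over
`F`, and so are their products with the `b_g`. Counting these products by degree against all
monomials of `F[V]` and letting `t → 1` in the generating functions gives
`|G| * (e + deg o) ≤ e * ∏ deg f_i ≤ e * |G|`, which is absurd.
-/

theorem tsum_pow_weight {τ : Type*} [Fintype τ] (t : ℝ≥0∞) (w : τ → ℕ) :
    ∑' m : τ →₀ ℕ, t ^ Finsupp.weight w m = ∏ i, (1 - t ^ w i)⁻¹ := by
  revert w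
  refine Fintype.induction_empty_option (P := fun τ _ => ∀ w : τ → ℕ,
    ∑' m : τ →₀ ℕ, t ^ Finsupp.weight w m = ∏ i, (1 - t ^ w i)⁻¹) ?_ ?_ ?_ τ
  · intro α β _ e ih w
    let _ := Fintype.ofEquiv β e.symm
    rw [← e.prod_comp, ← ih, ← (Finsupp.equivCongrLeft e).tsum_eq]
    simp [Finsupp.weight_eq_sum, ← e.sum_comp]
  · intro w
    simp
  · intro α _ ih w
    rw [Fintype.prod_option, ← ih, ← Finsupp.optionEquiv.symm.tsum_eq, ENNReal.tsum_prod',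
      ← ENNReal.tsum_geometric, ← ENNReal.tsum_mul_right]
    have hweight (k : ℕ) (m : α →₀ ℕ) : Finsupp.weight w (Finsupp.optionEquiv.symm (k, m))
        = w none * k + Finsupp.weight (fun i => w (some i)) m := by
      change Finsupp.weight w (m.optionElim k) = _
      simp [Finsupp.weight_eq_sum, mul_comm]
    simp only [hweight, pow_add, pow_mul, ENNReal.tsum_mul_left]

theorem tsum_pow_weight_add_mul_tsum {τ : Type*} (t : ℝ≥0∞) (w : τ → ℕ) (μ : τ →₀ ℕ) :
    ∑' m : {m : τ →₀ ℕ // ¬ μ ≤ m}, t ^ Finsupp.weight w m.1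
        + t ^ Finsupp.weight w μ * ∑' m : τ →₀ ℕ, t ^ Finsupp.weight w m
      = ∑' m : τ →₀ ℕ, t ^ Finsupp.weight w m := by
  let shift : (τ →₀ ℕ) ≃ {m // μ ≤ m} :=
    { toFun m := ⟨μ + m, le_self_add⟩
      invFun m := m - μ
      left_inv m := add_tsub_cancel_left μ m
      right_inv m := Subtype.ext (add_tsub_cancel_of_le m.2) }
  have tsum_multiples : ∑' m : {m // μ ≤ m}, t ^ Finsupp.weight w m.1
      = t ^ Finsupp.weight w μ * ∑' m : τ →₀ ℕ, t ^ Finsupp.weight w m := by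
    rw [← shift.tsum_eq, ← ENNReal.tsum_mul_left]
    simp [shift, pow_add]
  rw [← tsum_multiples, add_comm]
  exact Summable.tsum_add_tsum_compl (f := fun m => t ^ Finsupp.weight w m) (s := {m | μ ≤ m})
    ENNReal.summable ENNReal.summable

theorem geom_sum_eq_inv_mul {t : ℝ≥0∞} (ht : t < 1) (k : ℕ) :
    ∑ j ∈ range k, t ^ j = (1 - t)⁻¹ * (1 - t ^ k) := by
  have hfin : (1 - t)⁻¹ ≠ ⊤ := ENNReal.inv_ne_top.2 (tsub_pos_of_lt ht).ne'
  have hsplit : ∑ j ∈ range k, t ^ j + (1 - t)⁻¹ * t ^ k = (1 - t)⁻¹ := by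
    rw [← ENNReal.tsum_geometric, ← ENNReal.tsum_mul_right]
    simpa only [pow_add] using ENNReal.summable.sum_add_tsum_nat_add' (f := (t ^ ·)) (k := k)
  rw [ENNReal.mul_sub fun _ _ => hfin, mul_one]
  refine ENNReal.eq_sub_of_add_eq ?_ hsplit
  finiteness

theorem geom_sum_mul_inv_one_sub_pow {t : ℝ≥0∞} (ht : t < 1) {k : ℕ} (hk : k ≠ 0) :
    (∑ j ∈ range k, t ^ j) * (1 - t ^ k)⁻¹ = (1 - t)⁻¹ := by
  have hpos : 1 - t ^ k ≠ 0 := (tsub_pos_of_lt (pow_lt_one₀ zero_le ht hk)).ne'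
  rw [geom_sum_eq_inv_mul ht, mul_assoc, ENNReal.mul_inv_cancel hpos (by finiteness), mul_one]

theorem exists_injective_repr_ne_zero {R M ι κ : Type*} [CommRing R] [Nontrivial R]
    [AddCommGroup M] [Module R M] (b : Module.Basis κ R M) {v : ι → M}
    (hv : LinearIndependent R v) :
    ∃ e : ι → κ, Function.Injective e ∧ ∀ i, b.repr (v i) (e i) ≠ 0 := by
  classical
  obtain ⟨e, he, he'⟩ := (Finset.all_card_le_biUnion_card_iff_exists_injective
    fun i => (b.repr (v i)).support).1 fun s => by
      have hspan : Set.range (fun i : s => v i) ≤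
          Submodule.span R ((s.biUnion fun i => (b.repr (v i)).support).image b : Set M) := by
        rintro _ ⟨i, rfl⟩
        rw [coe_image, SetLike.mem_coe, b.mem_span_image]
        exact_mod_cast subset_biUnion_of_mem (fun i => (b.repr (v i)).support) i.2
      have := linearIndependent_le_span_aux' _ (hv.comp _ Subtype.val_injective) _ hspan
      simp only [Fintype.card_coe, SetLike.coe_sort_coe] at this
      exact this.trans card_image_le
  exact ⟨e, he, fun i => Finsupp.mem_support_iff.1 (he' i)⟩

theorem tsum_pow_le_of_linearIndependent {R σ J : Type*} [CommRing R] [Nontrivial R] [Fintype σ]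
    {q : J → MvPolynomial σ R} (hq : LinearIndependent R q) {δ : J → ℕ}
    (hδ : ∀ j, (q j).totalDegree ≤ δ j) {t : ℝ≥0∞} (ht : t ≤ 1) :
    ∑' j, t ^ δ j ≤ ((1 - t)⁻¹) ^ Fintype.card σ := by
  obtain ⟨e, he, he'⟩ := exists_injective_repr_ne_zero (basisMonomials σ R) hq
  have hdeg (j : J) : Finsupp.weight (fun _ => 1) (e j) ≤ δ j := by
    rw [← Finsupp.degree_eq_weight_one]
    exact (le_totalDegree (mem_support_iff.2 (he' j))).trans (hδ j)
  calc ∑' j, t ^ δ j ≤ ∑' j, t ^ Finsupp.weight (fun _ => 1) (e j) :=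
        ENNReal.tsum_le_tsum fun j => pow_le_pow_of_le_one zero_le ht (hdeg j)
    _ ≤ ∑' m : σ →₀ ℕ, t ^ Finsupp.weight (fun _ => 1) m :=
        ENNReal.tsum_comp_le_tsum_of_injective he fun m => t ^ Finsupp.weight (fun _ => 1) m
    _ = ((1 - t)⁻¹) ^ Fintype.card σ := by simp [tsum_pow_weight]

theorem tsum_pow_weight_not_le_mul {τ : Type*} {t : ℝ≥0∞} (ht : t < 1) (w : τ → ℕ)
    (hfin : ∑' m : τ →₀ ℕ, t ^ Finsupp.weight w m ≠ ⊤) (μ : τ →₀ ℕ) :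
    (∑' m : {m : τ →₀ ℕ // ¬ μ ≤ m}, t ^ Finsupp.weight w m.1) * (1 - t)⁻¹
      = (∑ j ∈ range (Finsupp.weight w μ), t ^ j) * ∑' m : τ →₀ ℕ, t ^ Finsupp.weight w m := by
  have hsub : ∑' m : {m : τ →₀ ℕ // ¬ μ ≤ m}, t ^ Finsupp.weight w m.1
      = (1 - t ^ Finsupp.weight w μ) * ∑' m : τ →₀ ℕ, t ^ Finsupp.weight w m := by
    rw [ENNReal.sub_mul fun _ _ => hfin, one_mul]
    exact ENNReal.eq_sub_of_add_eq (by finiteness) (tsum_pow_weight_add_mul_tsum t w μ)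
  rw [hsub, geom_sum_eq_inv_mul ht]
  ring

theorem totalDegree_aeval_monomial_le {R σ τ : Type*} [CommSemiring R] {w : τ → ℕ}
    {q : τ → MvPolynomial σ R} (hqw : ∀ i, (q i).totalDegree ≤ w i) (m : τ →₀ ℕ) :
    (aeval q (monomial m (1 : R))).totalDegree ≤ Finsupp.weight w m := by
  rw [aeval_monomial, map_one, one_mul, Finsupp.weight_apply]
  refine (totalDegree_finsetProd _ _).trans (sum_le_sum fun i _ => ?_)
  exact (totalDegree_pow _ _).trans (Nat.mul_le_mul_left _ (hqw i))

section
variable {R σ τ I : Type*} [CommRing R] [Nontrivial R] [Fintype σ] [Fintype τ] [Fintype I]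
  {w : τ → ℕ} {q : τ → MvPolynomial σ R}

theorem sum_pow_mul_geom_sum_le_prod_geom_sum (hcard : Fintype.card τ = Fintype.card σ + 1)
    (hw : ∀ i, w i ≠ 0) (hqw : ∀ i, (q i).totalDegree ≤ w i) {μ : τ →₀ ℕ}
    {b : I → MvPolynomial σ R}
    (hind : LinearIndependent R fun x : {m : τ →₀ ℕ // ¬ μ ≤ m} × I =>
      aeval q (monomial x.1.1 (1 : R)) * b x.2) {t : ℝ≥0∞} (ht : t < 1) :
    (∑ i, t ^ (b i).totalDegree) * ∑ j ∈ range (Finsupp.weight w μ), t ^ j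
      ≤ ∏ i, ∑ j ∈ range (w i), t ^ j := by
  set H := ∑' m : τ →₀ ℕ, t ^ Finsupp.weight w m
  have hgen : H = ∏ i, (1 - t ^ w i)⁻¹ := tsum_pow_weight t w
  have hfin : H ≠ ⊤ := hgen ▸ ENNReal.prod_ne_top fun i _ =>
    ENNReal.inv_ne_top.2 (tsub_pos_of_lt (pow_lt_one₀ zero_le ht (hw i))).ne'
  have hpos : H ≠ 0 := hgen ▸ prod_ne_zero_iff.2 fun i _ => ENNReal.inv_ne_zero.2 (by finiteness)
  have hcount := tsum_pow_le_of_linearIndependent hind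
    (δ := fun x => Finsupp.weight w x.1.1 + (b x.2).totalDegree)
    (fun x => (totalDegree_mul _ _).trans
      (Nat.add_le_add_right (totalDegree_aeval_monomial_le hqw _) _)) ht.le
  simp only [pow_add, ENNReal.tsum_prod', ENNReal.tsum_mul_left, ENNReal.tsum_mul_right]
    at hcount
  simp only [tsum_fintype] at hcount
  rw [← ENNReal.mul_le_mul_iff_left hpos hfin]
  calc (∑ i, t ^ (b i).totalDegree) * (∑ j ∈ range (Finsupp.weight w μ), t ^ j) * H
      = ((∑' m : {m : τ →₀ ℕ // ¬ μ ≤ m}, t ^ Finsupp.weight w m.1)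
          * ∑ i, t ^ (b i).totalDegree) * (1 - t)⁻¹ := by
        rw [mul_assoc, ← tsum_pow_weight_not_le_mul ht w hfin]
        ring
    _ ≤ (1 - t)⁻¹ ^ Fintype.card σ * (1 - t)⁻¹ := by gcongr
    _ = ∏ _i : τ, (1 - t)⁻¹ := by rw [prod_const, card_univ, hcard, pow_succ]
    _ = (∏ i, ∑ j ∈ range (w i), t ^ j) * H := by
        rw [hgen, ← prod_mul_distrib]
        exact prod_congr rfl fun i _ => (geom_sum_mul_inv_one_sub_pow ht (hw i)).symm

theorem card_mul_weight_le_prod (hcard : Fintype.card τ = Fintype.card σ + 1)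
    (hw : ∀ i, w i ≠ 0) (hqw : ∀ i, (q i).totalDegree ≤ w i) {μ : τ →₀ ℕ}
    {b : I → MvPolynomial σ R}
    (hind : LinearIndependent R fun x : {m : τ →₀ ℕ // ¬ μ ≤ m} × I =>
      aeval q (monomial x.1.1 (1 : R)) * b x.2) :
    Fintype.card I * Finsupp.weight w μ ≤ ∏ i, w i := by
  let s : Set ℝ≥0 := {t | (∑ i, t ^ (b i).totalDegree) * ∑ j ∈ range (Finsupp.weight w μ), t ^ j
      ≤ ∏ i, ∑ j ∈ range (w i), t ^ j}
  have hs : IsClosed s := isClosed_le (by fun_prop) (by fun_prop)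
  have hlt : Set.Iio (1 : ℝ≥0) ⊆ s := fun t ht => by
    have := sum_pow_mul_geom_sum_le_prod_geom_sum hcard hw hqw hind (ENNReal.coe_lt_one_iff.2 ht)
    exact_mod_cast this
  have hone : (1 : ℝ≥0) ∈ s := hs.closure_subset_iff.2 hlt <| by
    simp [closure_Iio' (a := (1 : ℝ≥0)) ⟨0, one_pos⟩]
  simpa [s, ← Nat.cast_prod, ← Nat.cast_mul] using hone
end

/-- The subalgebra of elements fixed by every member of a family of algebra endomorphisms; the ring
of invariants `F[V]^G` when `φ` is the action of `G` on `S = F[V]`. The family is not required to be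
closed under composition. -/
def fixedSubalgebra {F S G : Type*} [CommSemiring F] [Semiring S] [Algebra F S]
    (φ : G → S →ₐ[F] S) : Subalgebra F S :=
  ⨅ g, AlgHom.equalizer (φ g) (AlgHom.id F S)

theorem mem_fixedSubalgebra {F S G : Type*} [CommSemiring F] [Semiring S] [Algebra F S]
    {φ : G → S →ₐ[F] S} {p : S} : p ∈ fixedSubalgebra φ ↔ ∀ g, φ g p = p := by
  simp [fixedSubalgebra, Algebra.mem_iInf]

section
variable {F S G : Type*} [CommRing F] [CommRing S] [Algebra F S]

theorem linearIndependent_fixedSubalgebra_of_apply {K I : Type*} [Field K]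
    [Algebra S K] [FaithfulSMul S K] {φ : G → S →ₐ[F] S} {a : I → S}
    (ha : LinearIndependent K fun i g => algebraMap S K (φ g (a i))) :
    LinearIndependent (fixedSubalgebra φ) a := by
  have : FaithfulSMul (fixedSubalgebra φ) K := .trans _ S K
  let evalAll : S →ₗ[fixedSubalgebra φ] G → K :=
    { toFun s g := algebraMap S K (φ g s)
      map_add' s s' := by ext; simp
      map_smul' r s := by
        ext g
        simp only [Subalgebra.smul_def, smul_eq_mul, map_mul, mem_fixedSubalgebra.1 r.2 g,
          RingHom.id_apply, Pi.smul_apply, ← Algebra.smul_def] }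
  exact .of_comp evalAll (ha.restrict_scalars' (fixedSubalgebra φ))

theorem exists_linearIndependent_fixedSubalgebra [IsDomain S] [Finite G] {φ : G → S →ₐ[F] S}
    (hφ : Function.Injective φ) :
    ∃ b : G → S, LinearIndependent (fixedSubalgebra φ) b := by
  let K := FractionRing S
  let χ (g : G) : S →* K := (algebraMap S K : S →* K).comp (φ g)
  have hχ : Function.Injective χ := fun g h hgh =>
    hφ <| AlgHom.ext fun s => IsFractionRing.injective S K <| DFunLike.congr_fun hgh s
  have hspan : Submodule.span K (Set.range (flip fun g s => χ g s)) = ⊤ :=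
    span_flip_eq_top_iff_linearIndependent.2 ((linearIndependent_monoidHom S K).comp χ hχ)
  obtain ⟨I, a, -, hIspan, hI⟩ := exists_linearIndependent' K (flip fun g s => χ g s)
  let B : Module.Basis I K (G → K) := .mk hI (by rw [hIspan, hspan])
  let e : G ≃ I := (Pi.basisFun K G).indexEquiv B
  exact ⟨a ∘ e, linearIndependent_fixedSubalgebra_of_apply (hI.comp e e.injective)⟩
end

theorem exists_algebraMap_eq_of_natDegree_le_one {T S L K : Type*} [CommRing T] [CommRing S]
    [Field L] [Field K] [Algebra T S] [Algebra T L] [Algebra T K] [Algebra S K] [Algebra L K]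
    [IsScalarTower T S K] [IsScalarTower T L K] [FaithfulSMul T K] {p : S} {P : T[X]} (hP : P ≠ 0)
    (hP1 : P.natDegree ≤ 1) (hPp : Polynomial.aeval p P = 0) :
    ∃ r : L, algebraMap L K r = algebraMap S K p := by
  have hTK : Function.Injective (algebraMap T K) := FaithfulSMul.algebraMap_injective T K
  obtain ⟨a, c, rfl⟩ := Polynomial.exists_eq_X_add_C_of_natDegree_le_one hP1
  have hac : algebraMap T K a * algebraMap S K p + algebraMap T K c = 0 := by
    simpa [← IsScalarTower.algebraMap_apply] using congrArg (algebraMap S K) hPp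
  have ha : algebraMap T K a ≠ 0 := fun ha => hP <| by
    have hc : algebraMap T K c = 0 := by simpa [ha] using hac
    rw [(map_eq_zero_iff _ hTK).1 ha, (map_eq_zero_iff _ hTK).1 hc, map_zero, zero_mul, zero_add]
  refine ⟨-(algebraMap T L c / algebraMap T L a), ?_⟩
  rw [map_neg, map_div₀, ← IsScalarTower.algebraMap_apply, ← IsScalarTower.algebraMap_apply,
    neg_eq_iff_eq_neg, div_eq_iff ha]
  linear_combination hac

theorem exists_not_isUnit_dvd_leadingCoeff {T S : Type*} [CommRing T] [IsDomain T]
    [UniqueFactorizationMonoid T] [CommRing S] [IsDomain S] [Algebra T S] [FaithfulSMul T S]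
    {p : S} (hp : p ∉ Set.range (algebraMap T S)) {P : T[X]} (hP : P ≠ 0) (hP1 : P.natDegree ≤ 1)
    (hPp : Polynomial.aeval p P = 0) :
    ∃ b : T, b ≠ 0 ∧ ¬ IsUnit b ∧ ∀ Q : T[X], Polynomial.aeval p Q = 0 → b ∣ Q.leadingCoeff := by
  let L := FractionRing T
  let K := FractionRing S
  let _ : Algebra L K := FractionRing.liftAlgebra T K
  have hSK : Function.Injective (algebraMap S K) := IsFractionRing.injective S K
  have : FaithfulSMul T K := FaithfulSMul.trans T S K
  obtain ⟨r, hr⟩ : ∃ r : L, algebraMap L K r = algebraMap S K p :=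
    exists_algebraMap_eq_of_natDegree_le_one hP hP1 hPp
  refine ⟨IsFractionRing.den T r, nonZeroDivisors.coe_ne_zero _, fun hu => hp ?_, fun Q hQ => ?_⟩
  · obtain ⟨x, hx⟩ := IsFractionRing.isInteger_of_isUnit_den hu
    refine ⟨x, hSK ?_⟩
    rw [← hr, ← hx, ← IsScalarTower.algebraMap_apply, ← IsScalarTower.algebraMap_apply]
  · refine den_dvd_of_is_root ((algebraMap L K).injective ?_)
    rw [← Polynomial.aeval_algebraMap_apply, hr, Polynomial.aeval_algebraMap_apply, hQ, map_zero,
      map_zero]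

theorem linearIndependent_aeval_monomial {F S τ : Type*} [CommRing F] [CommRing S] [Algebra F S]
    {q : τ → S} {s : Set (τ →₀ ℕ)}
    (hs : ∀ Q : MvPolynomial τ F, ↑Q.support ⊆ s → aeval q Q = 0 → Q = 0) :
    LinearIndependent F fun m : s => aeval q (monomial m.1 (1 : F)) := by
  refine ((basisMonomials τ F).linearIndependent.comp _ Subtype.val_injective).map
    (f := (aeval q).toLinearMap) (Submodule.disjoint_def.2 fun Q hQ hQ0 => hs Q ?_ hQ0)
  rw [← mem_restrictSupport_iff (R := F), restrictSupport_eq_span, Set.image_eq_range]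
  exact hQ

theorem vars_nonempty_of_not_isUnit {F σ : Type*} [Field F] {b : MvPolynomial σ F} (hb : b ≠ 0)
    (hu : ¬ IsUnit b) : b.vars.Nonempty := by
  by_contra h
  rw [not_nonempty_iff_eq_empty, vars_eq_empty_iff_eq_C] at h
  have hcoeff : b.coeff 0 ≠ 0 := fun h0 => hb (by rw [h, h0, C_0])
  exact hu (isUnit_iff_eq_C_of_isReduced.2 ⟨_, hcoeff.isUnit, h⟩)

theorem vars_subset_vars_of_dvd {R σ : Type*} [CommSemiring R] [NoZeroDivisors R]
    {b c : MvPolynomial σ R} (hbc : b ∣ c) (hc : c ≠ 0) : b.vars ⊆ c.vars := by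
  obtain ⟨a, rfl⟩ := hbc
  intro i hi
  rw [mem_vars_iff_degreeOf_ne_zero] at hi ⊢
  rw [degreeOf_mul_eq (left_ne_zero_of_mul hc) (right_ne_zero_of_mul hc)]
  lia

section
variable {F S σ : Type*} [Field F] [CommRing S] [IsDomain S]

theorem exists_single_add_single_le_of_aeval_eq_zero [Algebra (MvPolynomial σ F) S]
    [FaithfulSMul (MvPolynomial σ F) S] {p : S}
    (hp : p ∉ Set.range (algebraMap (MvPolynomial σ F) S)) :
    ∃ o : Option σ, ∀ P : (MvPolynomial σ F)[X], P ≠ 0 → Polynomial.aeval p P = 0 →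
      ∃ m ∈ P.leadingCoeff.support,
        Finsupp.single none 1 + Finsupp.single o 1 ≤ m.optionElim P.natDegree := by
  classical
  by_cases hlin : ∃ P : (MvPolynomial σ F)[X], P ≠ 0 ∧ P.natDegree ≤ 1 ∧ Polynomial.aeval p P = 0
  · obtain ⟨P₁, hP₁, hdeg, hroot⟩ := hlin
    obtain ⟨b, hb, hbu, hdvd⟩ := exists_not_isUnit_dvd_leadingCoeff hp hP₁ hdeg hroot
    obtain ⟨i, hi⟩ := vars_nonempty_of_not_isUnit hb hbu
    refine ⟨some i, fun P hP hPp => ?_⟩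
    obtain ⟨m, hm, hmi⟩ := (mem_vars_iff_mem_support i).1
      (vars_subset_vars_of_dvd (hdvd P hPp) (Polynomial.leadingCoeff_ne_zero.2 hP) hi)
    have hnat : 0 < P.natDegree := Polynomial.natDegree_pos_of_aeval_root hP hPp fun x hx =>
      (map_eq_zero_iff _ (FaithfulSMul.algebraMap_injective _ S)).1 hx
    have hmi' : 0 < m i := Finsupp.mem_support_iff.1 hmi |>.pos
    refine ⟨m, hm, fun o => ?_⟩
    rcases o with _ | j
    · simpa using! hnat
    · obtain rfl | hij := eq_or_ne i j
      · simpa using! hmi'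
      · simp [hij]
  · push Not at hlin
    refine ⟨none, fun P hP hPp => ?_⟩
    obtain ⟨m, hm⟩ := support_nonempty.2 (Polynomial.leadingCoeff_ne_zero.2 hP)
    have hnat : 2 ≤ P.natDegree := not_lt.1 fun hlt => hlin P hP (Nat.le_of_lt_succ hlt) hPp
    refine ⟨m, hm, ?_⟩
    rwa [← Finsupp.single_add, Finsupp.single_le_iff, Finsupp.optionElim_apply_none]

theorem aeval_optionElim_eq_aeval_optionEquivLeft {R A : Type*} [CommRing R] [CommRing A]
    [Algebra R A] [Algebra (MvPolynomial σ R) A] [IsScalarTower R (MvPolynomial σ R) A] (p : A)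
    (Q : MvPolynomial (Option σ) R) :
    aeval (fun o => o.elim p fun i => algebraMap (MvPolynomial σ R) A (X i)) Q
      = Polynomial.aeval p (optionEquivLeft R σ Q) := by
  refine DFunLike.congr_fun (algHom_ext (g := ((Polynomial.aeval p).restrictScalars R).comp
    (optionEquivLeft R σ).toAlgHom) ?_) Q
  rintro (_ | i) <;> simp

theorem exists_linearIndependent_aeval_monomial [Algebra F S] {f : σ → S}
    (hf : AlgebraicIndependent F f) {p : S} (hp : p ∉ Algebra.adjoin F (Set.range f)) :
    ∃ o : Option σ, LinearIndependent F
      fun m : {m : Option σ →₀ ℕ // ¬ Finsupp.single none 1 + Finsupp.single o 1 ≤ m} =>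
        aeval (fun o => o.elim p f) (monomial m.1 (1 : F)) := by
  let _ : Algebra (MvPolynomial σ F) S := (aeval f).toAlgebra
  have : IsScalarTower F (MvPolynomial σ F) S := .of_algebraMap_eq' (aeval f).comp_algebraMap.symm
  have : FaithfulSMul (MvPolynomial σ F) S := (faithfulSMul_iff_algebraMap_injective _ _).2 hf
  rw [Algebra.adjoin_range_eq_range_aeval] at hp
  obtain ⟨o, ho⟩ := exists_single_add_single_le_of_aeval_eq_zero hp
  refine ⟨o, linearIndependent_aeval_monomial fun Q hQ hQ0 => by_contra fun hne => ?_⟩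
  replace hQ0 : Polynomial.aeval p (optionEquivLeft F σ Q) = 0 := by
    rw [← aeval_optionElim_eq_aeval_optionEquivLeft, ← hQ0]
    simp [RingHom.algebraMap_toAlgebra]
  obtain ⟨m, hm, hom⟩ := ho _ ((map_ne_zero_iff _ (optionEquivLeft F σ).injective).2 hne) hQ0
  exact hQ ((mem_support_coeff_optionEquivLeft F).1 hm) hom
end

theorem linearIndependent_aeval_mul {F S ι I τ : Type*} [CommRing F] [CommRing S] [Algebra F S]
    {A : Subalgebra F S} {q : τ → A} {Q : ι → MvPolynomial τ F} {b : I → S}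
    (hQ : LinearIndependent F fun m => aeval q (Q m)) (hb : LinearIndependent A b) :
    LinearIndependent F fun x : ι × I => aeval (fun i => (q i : S)) (Q x.1) * b x.2 := by
  convert linearIndependent_smul hQ hb with x
  rw [Subalgebra.smul_def, ← Subalgebra.coe_val, ← comp_aeval_apply]
  simp

theorem mem_bot_of_totalDegree_eq_zero {R σ : Type*} [CommRing R]
    {A : Subalgebra R (MvPolynomial σ R)} {a : A} (ha : a.1.totalDegree = 0) :
    a ∈ (⊥ : Subalgebra R A) :=
  Algebra.mem_bot.2 ⟨_, Subtype.ext (totalDegree_eq_zero_iff_eq_C.1 ha).symm⟩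

theorem adjoin_range_eq_top_of_prod_totalDegree_le {F σ I : Type*} [Field F] [Fintype σ]
    [Fintype I] {A : Subalgebra F (MvPolynomial σ F)} {b : I → MvPolynomial σ F}
    (hb : LinearIndependent A b) {f : σ → A} (hf : AlgebraicIndependent F f)
    (hdeg : ∏ i, (f i).1.totalDegree ≤ Fintype.card I) :
    Algebra.adjoin F (Set.range f) = ⊤ := by
  refine Algebra.eq_top_iff.2 fun p => by_contra fun hp => ?_
  have hp0 : p.1.totalDegree ≠ 0 := fun h =>
    hp ((bot_le : ⊥ ≤ Algebra.adjoin F _) (mem_bot_of_totalDegree_eq_zero h))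
  have hf0 (i : σ) : (f i).1.totalDegree ≠ 0 := fun h => by
    obtain ⟨c, hc⟩ := Algebra.mem_bot.1 (mem_bot_of_totalDegree_eq_zero h)
    exact hf.transcendental i (hc ▸ isAlgebraic_algebraMap c)
  obtain ⟨o, ho⟩ := exists_linearIndependent_aeval_monomial hf hp
  let w (o : Option σ) : ℕ := (o.elim p f).1.totalDegree
  have hw : ∀ o, w o ≠ 0 := Option.rec hp0 hf0
  have hcount : Fintype.card I * (w none + w o) ≤ ∏ o, w o := by
    have hind := linearIndependent_aeval_mul ho hb
    have hbound := card_mul_weight_le_prod Fintype.card_option hw (fun _ => le_rfl) hind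
    simpa only [map_add, Finsupp.weight_single, one_smul] using hbound
  have hprod : ∏ o, w o ≤ Fintype.card I * w none := by
    rw [Fintype.prod_option, mul_comm]
    exact Nat.mul_le_mul_right (w none) hdeg
  have hI : 0 < Fintype.card I := (prod_pos fun i _ => (hf0 i).pos).trans_le hdeg
  have hwo : w none + w o ≤ w none := Nat.le_of_mul_le_mul_left (hcount.trans hprod) hI
  exact hw o (by lia)

theorem aeval_linearForms_injective {R σ : Type*} [CommRing R] [Fintype σ] :
    Function.Injective fun A : Matrix σ σ R =>
      (aeval fun k => ∑ j, A k j • X j : MvPolynomial σ R →ₐ[R] MvPolynomial σ R) := by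
  classical
  intro A B hAB
  ext k l
  have := congrArg (coeff (.single l 1)) (DFunLike.congr_fun hAB (X k))
  simpa [coeff_sum, coeff_smul, coeff_X, Finsupp.single_left_inj] using this

theorem stmt_7_general {F σ G : Type*} [Field F] [Fintype σ] [Fintype G]
    {φ : G → MvPolynomial σ F →ₐ[F] MvPolynomial σ F} (hφ : Function.Injective φ)
    {f : σ → MvPolynomial σ F} (hinv : ∀ g i, φ g (f i) = f i) (halg : AlgebraicIndependent F f)
    (hdeg : ∏ i, (f i).totalDegree ≤ Fintype.card G) :
    fixedSubalgebra φ = Algebra.adjoin F (Set.range f) := by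
  obtain ⟨b, hb⟩ := exists_linearIndependent_fixedSubalgebra hφ
  let f' (i : σ) : fixedSubalgebra φ := ⟨f i, mem_fixedSubalgebra.2 (hinv · i)⟩
  have hf' : AlgebraicIndependent F f' := .of_comp (fixedSubalgebra φ).val halg
  calc fixedSubalgebra φ = (Algebra.adjoin F (Set.range f')).map (fixedSubalgebra φ).val := by
        rw [adjoin_range_eq_top_of_prod_totalDegree_le hb hf' hdeg, Algebra.map_top,
          Subalgebra.range_val]
    _ = Algebra.adjoin F (Set.range f) := by
        rw [AlgHom.map_adjoin, ← Set.range_comp]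
        rfl

theorem stmt_7 (F : Type*) [Field F] (n : ℕ) (G : Type*) [Group G] [Fintype G]
    (M : G →* Matrix.GeneralLinearGroup (Fin n) F) (hM : Function.Injective M)
    (f : Fin n → MvPolynomial (Fin n) F) (d : Fin n → ℕ)
    (hhom : ∀ i, (f i).IsHomogeneous (d i))
    (hinv : ∀ (g : G) (i : Fin n),
      MvPolynomial.aeval (R := F)
        (fun k => ∑ j, ((M g : Matrix (Fin n) (Fin n) F) k j) • MvPolynomial.X j) (f i) = f i)
    (halg : AlgebraicIndependent F f)
    (hdeg : ∏ i, d i = Fintype.card G) :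
    {p : MvPolynomial (Fin n) F |
        ∀ g : G, MvPolynomial.aeval (R := F)
          (fun k => ∑ j, ((M g : Matrix (Fin n) (Fin n) F) k j) • MvPolynomial.X j) p = p}
      = ↑(Algebra.adjoin F (Set.range f)) := by
  have hact := (aeval_linearForms_injective (R := F)).comp (Units.val_injective.comp hM)
  have hle : ∏ i, (f i).totalDegree ≤ Fintype.card G :=
    hdeg ▸ prod_le_prod' fun i _ => (hhom i).totalDegree_le
  rw [← stmt_7_general hact hinv halg hle]
  ext p
  exact mem_fixedSubalgebra.symm
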